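/- Let K be an algebraically closed field, f_1,…,f_s and φ symmetric polynomials in K[x_1,…,x_n] with s < n, and λ a partition of n of length ℓ with ℓ ≤ s. Then E_λ(W(φ,f) ∩ C_λ) = { ε ∈ K^ℓ : f̄_i^{[λ]}(ε) = 0 for i = 1,…,s }, that is: a point ε ∈ K^ℓ satisfies f̄_1^{[λ]}(ε) = ⋯ = f̄_s^{[λ]}(ε) = 0 if and only if there exists ζ ∈ K^ℓ with ι_λ(ζ) ∈ W(φ,f) and E_λ(ζ) = ε. -/

import Mathlib

/-!
Two facts carry the proof.

* *The rank condition is automatic on `C_λ`.* If `g` is symmetric and the point `ξ` has equal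
  coordinates `ξ i = ξ j`, then swapping `i` and `j` fixes both `g` and `ξ`, so
  `∂g/∂x_i (ξ) = ∂g/∂x_j (ξ)` (`eval_pderiv_eq_of_isSymmetric`). At `ξ = ι_λ(ζ)` the Jacobian matrix
  therefore has at most `ℓ` distinct columns, and its rank is at most `ℓ ≤ s`
  (`rank_le_of_col_eq`).
* *`E_λ` is surjective over an algebraically closed field* (`Emap_surjective`). In each block
  prescribe the elementary symmetric functions and take for `ζ` the roots of the monic polynomial
  having these values, up to sign, as coefficients (`exists_esymm_eq`, by Vieta).

Since `T_λ(f_i) = f̄_i(η)`, evaluation at `ζ` gives `f̄_i(E_λ(ζ)) = f_i(ι_λ(ζ))`, and the equivalence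
follows.
-/

/-- A partition `λ = (n_1^{ℓ_1} ⋯ n_r^{ℓ_r})` of `n`: integers `0 < n_1 < ⋯ < n_r`
(the `parts`) with multiplicities `ℓ_i ≥ 1` (the `mult`) and `∑ n_i ℓ_i = n`. -/
structure PartitionOf (n : ℕ) where
  r : ℕ
  parts : Fin r → ℕ
  mult : Fin r → ℕ
  parts_pos : ∀ i, 0 < parts i
  parts_strictMono : StrictMono parts
  mult_pos : ∀ i, 0 < mult i
  sum_eq : ∑ i, parts i * mult i = n

namespace PartitionOf

variable {n : ℕ}

/-- The length `ℓ = ℓ_1 + ⋯ + ℓ_r` of the partition. -/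
def length (lam : PartitionOf n) : ℕ := ∑ i, lam.mult i

/-- `τ_k = ℓ_1 + ⋯ + ℓ_k` (so `τ_0 = 0` and `τ_r = ℓ`). -/
def tau (lam : PartitionOf n) (k : ℕ) : ℕ :=
  ∑ i ∈ Finset.univ.filter (fun j : Fin lam.r => (j : ℕ) < k), lam.mult i

/-- `σ ∈ S_λ`: the permutation `σ` of `{0,…,ℓ−1}` preserves each block
`{τ_k,…,τ_{k+1}−1}` (0-based indexing of the blocks `{τ_{k-1}+1,…,τ_k}`). -/
def InSlambda (lam : PartitionOf n) (σ : Equiv.Perm (Fin lam.length)) : Prop :=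
  ∀ k : ℕ, k < lam.r → ∀ i : Fin lam.length,
    lam.tau k ≤ (i : ℕ) → (i : ℕ) < lam.tau (k + 1) →
      lam.tau k ≤ ((σ i : Fin lam.length) : ℕ) ∧
        ((σ i : Fin lam.length) : ℕ) < lam.tau (k + 1)

end PartitionOf

/-- The index (0-based) of the block of the partition containing position `c`. -/
def blockIdx {n : ℕ} (lam : PartitionOf n) (c : Fin lam.length) : ℕ :=
  Nat.findGreatest (fun k => lam.tau k ≤ (c : ℕ)) lam.r

/-- The (0-based) block `{τ_k,…,τ_{k+1}−1}` of positions, as a finset of `Fin ℓ`. -/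
def blockFinset {n : ℕ} (lam : PartitionOf n) (k : ℕ) : Finset (Fin lam.length) :=
  Finset.univ.filter fun a : Fin lam.length =>
    lam.tau k ≤ (a : ℕ) ∧ (a : ℕ) < lam.tau (k + 1)

/-- `η` at position `c`: the elementary symmetric polynomial of degree `j` (the 1-based offset
of `c` in its block) in the variables of the block of `c`. -/
noncomputable def etaPoly {K : Type*} [CommSemiring K] {n : ℕ} (lam : PartitionOf n)
    (c : Fin lam.length) : MvPolynomial (Fin lam.length) K :=
  ∑ A ∈ (blockFinset lam (blockIdx lam c)).powersetCard
      ((c : ℕ) - lam.tau (blockIdx lam c) + 1),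
    ∏ a ∈ A, MvPolynomial.X a

/-- The compression map `E_λ : K^ℓ → K^ℓ`, sending `ζ` to the values of the blockwise
elementary symmetric polynomials at `ζ`. -/
noncomputable def Emap {K : Type*} [CommSemiring K] {n : ℕ} (lam : PartitionOf n)
    (ζ : Fin lam.length → K) : Fin lam.length → K :=
  fun c => MvPolynomial.eval ζ (etaPoly lam c)

open MvPolynomial

/-- Partial derivatives of a symmetric polynomial agree in directions whose coordinates agree. -/
theorem eval_pderiv_eq_of_isSymmetric {K : Type*} [CommSemiring K] {σ : Type*}
    {g : MvPolynomial σ K} (hg : g.IsSymmetric) {ξ : σ → K} {i j : σ} (h : ξ i = ξ j) :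
    eval ξ (pderiv i g) = eval ξ (pderiv j g) := by
  classical
  have h1 := pderiv_rename (R := K) (Equiv.swap i j).injective i g
  rw [hg (Equiv.swap i j), Equiv.swap_apply_left] at h1
  rw [h1, eval_rename]
  congr 2
  funext x
  simp only [Function.comp_apply, Equiv.swap_apply_def]
  split_ifs with h2 h3
  · rw [h2, h]
  · rw [h3, h]
  · rfl

theorem rank_le_of_col_eq {K : Type*} [Field K] {m n l : ℕ} (J : Matrix (Fin m) (Fin n) K)
    (ψ : Fin n → Fin l) (h : ∀ i j j', ψ j = ψ j' → J i j = J i j') : J.rank ≤ l := by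
  classical
  -- `A` keeps one column of `J` for each value of `ψ`, and `P` redistributes these columns.
  let A : Matrix (Fin m) (Fin l) K :=
    Matrix.of fun i c => if hc : ∃ j, ψ j = c then J i hc.choose else 0
  let P : Matrix (Fin l) (Fin n) K := Matrix.of fun c j => if c = ψ j then 1 else 0
  have hJ : J = A * P := by
    ext i j
    have hc : ∃ j', ψ j' = ψ j := ⟨j, rfl⟩
    simp only [Matrix.mul_apply, A, P, Matrix.of_apply, mul_ite, mul_one, mul_zero,
      Finset.sum_ite_eq', Finset.mem_univ, if_true]
    rw [dif_pos hc]
    exact h i j _ hc.choose_spec.symm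
  rw [hJ]
  exact (Matrix.rank_mul_le_left A P).trans (Matrix.rank_le_width A)

theorem exists_map_val_eq {α K : Type*} [Zero K] (B : Finset α) :
    ∀ R : Multiset K, R.card = B.card → ∃ z : α → K, B.val.map z = R := by
  classical
  induction B using Finset.induction_on with
  | empty =>
    intro R hR
    exact ⟨fun _ => 0, by simpa [eq_comm] using hR⟩
  | insert a B ha ih =>
    intro R hR
    rw [Finset.card_insert_of_notMem ha] at hR
    obtain ⟨b, hb⟩ := Multiset.card_pos_iff_exists_mem.mp (by omega : 0 < R.card)
    obtain ⟨R', rfl⟩ := Multiset.exists_cons_of_mem hb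
    have hR' : R'.card = B.card := by simpa using hR
    obtain ⟨z, rfl⟩ := ih R' hR'
    refine ⟨Function.update z a b, ?_⟩
    rw [Finset.insert_val_of_notMem ha, Multiset.map_cons, Function.update_self]
    congr 1
    refine Multiset.map_congr rfl fun x hx => Function.update_of_ne ?_ _ _
    rintro rfl
    exact ha hx

/-- Over an algebraically closed field, the elementary symmetric functions of the variables indexed
by `B` take any prescribed values `e 1, …, e |B|`. -/
theorem exists_esymm_eq {α K : Type*} [Field K] [IsAlgClosed K] (B : Finset α) (e : ℕ → K) :
    ∃ z : α → K, ∀ j, 1 ≤ j → j ≤ B.card →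
      ∑ A ∈ B.powersetCard j, ∏ a ∈ A, z a = e j := by
  classical
  set m := B.card with hm
  let q : Polynomial K := ∑ i : Fin m,
    Polynomial.C ((-1) ^ (m - (i : ℕ)) * e (m - i)) * Polynomial.X ^ (i : ℕ)
  let p : Polynomial K := Polynomial.X ^ m + q
  have hq : q.degree < m := Polynomial.degree_sum_fin_lt _
  have hmonic : p.Monic := Polynomial.monic_X_pow_add hq
  have hdeg : p.natDegree = m := by
    apply Polynomial.natDegree_eq_of_degree_eq_some
    rw [show p = Polynomial.X ^ m + q from rfl, Polynomial.degree_add_eq_left_of_degree_lt,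
      Polynomial.degree_X_pow]
    rwa [Polynomial.degree_X_pow]
  have hsplit : p.Splits := IsAlgClosed.splits p
  obtain ⟨z, hz⟩ := exists_map_val_eq B p.roots
    (by rw [← hsplit.natDegree_eq_card_roots, hdeg])
  refine ⟨z, fun j hj1 hjm => ?_⟩
  have hlt : m - j < m := by omega
  have hsub : m - (m - j) = j := by omega
  have hc := Polynomial.coeff_eq_esymm_roots_of_splits hsplit (k := m - j) (by omega)
  rw [hdeg, hsub, hmonic.leadingCoeff, one_mul, ← hz, Finset.esymm_map_val] at hc
  have hcoeff : p.coeff (m - j) = (-1) ^ j * e j := by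
    have hq' : q.coeff (m - j) = (-1) ^ j * e j := by
      simp only [q, Polynomial.finsetSum_coeff, Polynomial.coeff_C_mul_X_pow]
      rw [Finset.sum_eq_single (⟨m - j, hlt⟩ : Fin m)]
      · simp [hsub]
      · intro b _ hb
        exact if_neg fun h => hb (Fin.ext h.symm)
      · simp
    rw [show p = Polynomial.X ^ m + q from rfl, Polynomial.coeff_add, hq',
      Polynomial.coeff_X_pow, if_neg hlt.ne, zero_add]
  rw [hcoeff] at hc
  exact (mul_left_cancel₀ (pow_ne_zero j (neg_ne_zero.mpr one_ne_zero)) hc).symm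

theorem tau_zero {n : ℕ} (lam : PartitionOf n) : lam.tau 0 = 0 := by
  simp [PartitionOf.tau]

theorem tau_r {n : ℕ} (lam : PartitionOf n) : lam.tau lam.r = lam.length := by
  simp [PartitionOf.tau, PartitionOf.length]

theorem tau_mono {n : ℕ} (lam : PartitionOf n) : Monotone lam.tau := by
  intro a b hab
  refine Finset.sum_le_sum_of_subset fun i hi => ?_
  simp only [Finset.mem_filter, Finset.mem_univ, true_and] at hi ⊢
  omega

theorem tau_blockIdx_le {n : ℕ} (lam : PartitionOf n) (c : Fin lam.length) :
    lam.tau (blockIdx lam c) ≤ c :=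
  Nat.findGreatest_spec (P := fun k => lam.tau k ≤ (c : ℕ)) (Nat.zero_le lam.r)
    (by simp [tau_zero])

theorem lt_tau_blockIdx_succ {n : ℕ} (lam : PartitionOf n) (c : Fin lam.length) :
    (c : ℕ) < lam.tau (blockIdx lam c + 1) := by
  have hle : blockIdx lam c ≤ lam.r := Nat.findGreatest_le _
  have hne : blockIdx lam c ≠ lam.r := by
    intro h
    have h1 := tau_blockIdx_le lam c
    rw [h, tau_r] at h1
    exact absurd c.isLt (by omega)
  exact not_le.mp (Nat.findGreatest_is_greatest (P := fun k => lam.tau k ≤ (c : ℕ))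
    (Nat.lt_succ_self (blockIdx lam c)) (by omega))

theorem mem_blockFinset {n : ℕ} {lam : PartitionOf n} {k : ℕ} {a : Fin lam.length} :
    a ∈ blockFinset lam k ↔ lam.tau k ≤ (a : ℕ) ∧ (a : ℕ) < lam.tau (k + 1) := by
  simp [blockFinset]

theorem blockIdx_eq_of_mem {n : ℕ} {lam : PartitionOf n} {k : ℕ} {a : Fin lam.length}
    (ha : a ∈ blockFinset lam k) : blockIdx lam a = k := by
  rw [mem_blockFinset] at ha
  have h1 := tau_blockIdx_le lam a
  have h2 := lt_tau_blockIdx_succ lam a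
  by_contra hne
  rcases Nat.lt_or_gt_of_ne hne with h | h
  · have := tau_mono lam (show blockIdx lam a + 1 ≤ k from h)
    omega
  · have := tau_mono lam (show k + 1 ≤ blockIdx lam a from h)
    omega

/-- The block of `c` is large enough for the degree of the elementary symmetric polynomial attached
to `c`, because it contains the interval from the start of the block to `c`. -/
theorem offset_le_card_block {n : ℕ} (lam : PartitionOf n) (c : Fin lam.length) :
    (c : ℕ) - lam.tau (blockIdx lam c) + 1 ≤ (blockFinset lam (blockIdx lam c)).card := by
  have h1 := tau_blockIdx_le lam c
  have h2 := lt_tau_blockIdx_succ lam c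
  have hsub : Finset.Icc (⟨lam.tau (blockIdx lam c), h1.trans_lt c.isLt⟩ : Fin lam.length) c ⊆
      blockFinset lam (blockIdx lam c) := by
    intro a ha
    rw [Finset.mem_Icc, Fin.le_def, Fin.le_def] at ha
    exact mem_blockFinset.mpr ⟨ha.1, lt_of_le_of_lt ha.2 h2⟩
  have hcard := Finset.card_le_card hsub
  rw [Fin.card_Icc] at hcard
  simp only at hcard
  omega

theorem Emap_surjective {K : Type*} [Field K] [IsAlgClosed K] {n : ℕ} (lam : PartitionOf n) :
    Function.Surjective (Emap (K := K) lam) := by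
  intro ε
  -- Position `τ_k + j - 1` carries the prescribed value of the `j`-th elementary symmetric function
  -- of block `k`.
  choose z hz using fun k : ℕ => exists_esymm_eq (blockFinset lam k)
    (fun j => if h : lam.tau k + j - 1 < lam.length then ε ⟨lam.tau k + j - 1, h⟩ else 0)
  refine ⟨fun a => z (blockIdx lam a) a, ?_⟩
  funext c
  have h1 := tau_blockIdx_le lam c
  have hidx : lam.tau (blockIdx lam c) + ((c : ℕ) - lam.tau (blockIdx lam c) + 1) - 1 = c := by
    omega
  have hc := hz (blockIdx lam c) ((c : ℕ) - lam.tau (blockIdx lam c) + 1) (by omega)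
    (offset_le_card_block lam c)
  simp only [hidx, c.isLt, dif_pos, Fin.eta] at hc
  rw [← hc]
  simp only [Emap, etaPoly, map_sum, map_prod, eval_X]
  refine Finset.sum_congr rfl fun A hA => Finset.prod_congr rfl fun a ha => ?_
  rw [blockIdx_eq_of_mem ((Finset.mem_powersetCard.mp hA).1 ha)]

/-- For `K` algebraically closed, symmetric `f_1,…,f_s, φ`, and a partition `λ` of `n` of
length `ℓ ≤ s`: a point `ε ∈ K^ℓ` kills all `f̄_i^{[λ]}` iff `ε = E_λ(ζ)` for some `ζ` with
`ι_λ(ζ) ∈ W(φ,f)`, i.e. `E_λ(W(φ,f) ∩ C_λ) = V(f̄_1^{[λ]},…,f̄_s^{[λ]})`. -/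
theorem stmt12 {K : Type*} [Field K] [IsAlgClosed K] {n s : ℕ} (hs : s < n)
    (f : Fin s → MvPolynomial (Fin n) K) (φ : MvPolynomial (Fin n) K)
    (hf : ∀ i, (f i).IsSymmetric) (hφ : φ.IsSymmetric)
    (lam : PartitionOf n) (hls : lam.length ≤ s)
    (ψ : Fin n → Fin lam.length) (hmono : Monotone ψ)
    (hfib : ∀ (k : ℕ) (hk : k < lam.r), ∀ c : Fin lam.length,
      lam.tau k ≤ (c : ℕ) → (c : ℕ) < lam.tau (k + 1) →
        (Finset.univ.filter fun x : Fin n => ψ x = c).card = lam.parts ⟨k, hk⟩)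
    (fbar : Fin s → MvPolynomial (Fin lam.length) K)
    (hfbar : ∀ i, aeval (etaPoly (K := K) lam) (fbar i) = rename ψ (f i))
    (ε : Fin lam.length → K) :
    (∀ i, eval ε (fbar i) = 0) ↔
      ∃ ζ : Fin lam.length → K,
        ((∀ i, eval (ζ ∘ ψ) (f i) = 0) ∧
          (Matrix.of fun (i : Fin (s + 1)) (j : Fin n) =>
            eval (ζ ∘ ψ)
              (pderiv j ((Fin.snoc f φ : Fin (s + 1) → MvPolynomial (Fin n) K) i))).rank ≤ s) ∧
        Emap lam ζ = ε := by
  have key : ∀ (ζ : Fin lam.length → K) i,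
      eval (Emap lam ζ) (fbar i) = eval (ζ ∘ ψ) (f i) := by
    intro ζ i
    rw [← eval_rename, ← hfbar i]
    rw [← coe_aeval_eq_eval, ← coe_aeval_eq_eval]
    exact (DFunLike.congr_fun (comp_aeval (etaPoly (K := K) lam) (aeval ζ)) (fbar i)).symm
  constructor
  · intro h
    obtain ⟨ζ, rfl⟩ := Emap_surjective lam ε
    refine ⟨ζ, ⟨fun i => by rw [← key, h i], ?_⟩, rfl⟩
    refine (rank_le_of_col_eq _ ψ fun i j j' hj => ?_).trans hls
    have hsym : ((Fin.snoc f φ : Fin (s + 1) → MvPolynomial (Fin n) K) i).IsSymmetric := by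
      refine Fin.lastCases ?_ (fun i => ?_) i
      · simpa using hφ
      · simpa using hf i
    exact eval_pderiv_eq_of_isSymmetric hsym (congrArg ζ hj)
  · rintro ⟨ζ, ⟨hζ, -⟩, rfl⟩ i
    rw [key, hζ i]
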